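/- Let γ > 0, 1 < α < 2, p > 1, a > 0, b > 0, and let β ∈ [α/2, α). Suppose w ∈ C¹([0,∞)), w ≢ 0, the function t ↦ ₀I_t^{2−α}(w(s) − w'(0)s − w(0)) is in AC²([0,T]) for every T > 0, and for almost every t ≥ 0 one has (₀D_t^α w)(t) + a·w(t) ≥ b·(₀I_t^γ (|w|^p))(t). If α + γ ≤ 2 and w'(0) > 0, then liminf_{t→+∞} t^{α−β−1}·(₀I_t^β w)(t) > 0. -/

import Mathlib

/-!
Since `rlInt γ (|w|^p) ≥ 0`, the function `w` satisfies the linear inequality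
`f := D^α w + a w ≥ 0` almost everywhere on `[0, ∞)`, and nothing else about the right-hand side
is needed.  Write `α = 2μ` with `1/2 < μ < 1`, and
`E_σ(x) = ∑ (-x)^j / Γ(σ + jα)` (`mlr α σ x`).

* Inverting the Caputo derivative gives `w(t) = w(0) + w'(0) t + I^α (D^α w)(t)` (`caputo_rep`),
  hence `I^ρ w = w(0) t^ρ/Γ(ρ+1) + w'(0) t^(ρ+1)/Γ(ρ+2) + I^(ρ+α) f - a I^(ρ+α) w`.  Iterating
  from `ρ = β` yields the variation-of-constants formula
  `I^β w = w(0) t^β E_{β+1}(a t^α) + w'(0) t^(β+1) E_{β+2}(a t^α) + k * f`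
  with convolution kernel `k(s) = s^(β+α-1) E_{β+α}(a s^α)`.

* The kernel is nonnegative because `β ≥ μ`: for `σ ≥ μ` and `y ≥ 0`,
  `|∑ (iy)^j / Γ(σ + jμ)| ≤ 1/Γ(σ)` (`norm_ml_le`).  The real part of this sum is
  `E_σ(y²) = 1/Γ(σ) - y² E_{σ+α}(y²)`, so `E_{σ+α} ≥ 0` (`mlr_nonneg`); the imaginary part is
  `y E_{σ+μ}(y²)`, so `E_{σ+μ}(x) = O(x^(-1/2))` (`mlr_abs_le`).

* The bound `norm_ml_le` is obtained by discretisation.  With `binC σ m` the coefficient of `X^m`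
  in `(1 - X)^(-σ)`, the sums `H m = ∑ (iθ)^j binC (σ + jμ) m` are the coefficients of
  `(1 - X)^(-σ) / (1 - iθ (1 - X)^(-μ))`, that is, they satisfy
  `(1 - X)^μ H = (1 - X)^(μ-σ) + iθ H`.  The coefficients of `(1 - X)^μ` beyond the constant one
  are nonpositive, those of `(1 - X)^(μ-σ)` are nonnegative, and `|1 - iθ| ≥ 1`, so induction on
  `m` gives `|H m| ≤ binC σ m`.  Since `m^(1-σ) binC σ m → 1/Γ(σ)`, taking `θ = y m^(-μ)` and
  letting `m → ∞` gives the claim.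

* It remains to bound `E_{β+2}` from below.  Applying the positivity of the kernel to the
  nonnegative function `s ↦ s^(1-α) - t^(1-α)` on `(0, t]` gives
  `Γ(2-α) a t^α E_{β+2}(a t^α) ≥ 1/Γ(β+1) - E_{β+1}(a t^α)` (`mlr_lower`), and
  `E_{β+1}(a t^α) = O(t^(-μ))`.  Therefore `t^(α-β-1) I^β w(t)` is at least
  `w'(0) / (a Γ(2-α) Γ(β+1)) - O(t^(μ-1)) - O(t^(-μ))`.
-/

open MeasureTheory Filter

/-- Riemann–Liouville fractional integral of order `σ` based at `0`:
`(₀I_t^σ f)(t) = (1/Γ(σ)) ∫₀ᵗ (t−s)^{σ−1} f(s) ds`. -/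
noncomputable def rlInt (σ : ℝ) (f : ℝ → ℝ) (t : ℝ) : ℝ :=
  (1 / Real.Gamma σ) * ∫ s in (0:ℝ)..t, (t - s) ^ (σ - 1) * f s

/-- The function whose second derivative is the (left) Caputo derivative of order `α ∈ (1,2]`:
for `α < 2` it is `₀I_t^{2−α}(w(s) − w'(0)·s − w(0))`, and for `α = 2` it is `w` itself. -/
noncomputable def capKernel (α : ℝ) (w : ℝ → ℝ) : ℝ → ℝ :=
  if α = 2 then w else rlInt (2 - α) (fun s => w s - deriv w 0 * s - w 0)

/-- Left Caputo fractional derivative of order `α ∈ (1,2]`: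
`(₀D_t^α w)(t) = (d²/dt²)[ ₀I_t^{2−α}(w(s) − w'(0)s − w(0)) ](t)` (second derivative of `w` when `α = 2`). -/
noncomputable def caputoD (α : ℝ) (w : ℝ → ℝ) : ℝ → ℝ :=
  deriv (deriv (capKernel α w))

/-- `g ∈ AC²([0,T])`: `g` is differentiable on `[0,T]`, its second derivative is integrable,
and `g'` is the integral of `g''` (i.e. `g'` is absolutely continuous). -/
def AC2On (g : ℝ → ℝ) (T : ℝ) : Prop :=
  (∀ t ∈ Set.Icc (0:ℝ) T, DifferentiableAt ℝ g t) ∧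
  IntervalIntegrable (deriv (deriv g)) volume 0 T ∧
  ∀ t ∈ Set.Icc (0:ℝ) T, deriv g t = deriv g 0 + ∫ s in (0:ℝ)..t, deriv (deriv g) s

/-! ### Coefficients of `(1 - X)^(-σ)` -/

/-- The coefficient of `X^m` in `(1 - X)^(-σ)`, i.e. `σ (σ+1) ⋯ (σ+m-1) / m!`; `σ` may be any
real number. -/
noncomputable def binC (σ : ℝ) (m : ℕ) : ℝ := ∏ i ∈ Finset.range m, (σ + i) / (i + 1)

lemma binC_zero_right (σ : ℝ) : binC σ 0 = 1 := by simp [binC]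

lemma binC_succ (σ : ℝ) (m : ℕ) : binC σ (m + 1) = binC σ m * ((σ + m) / (m + 1)) := by
  rw [binC, Finset.prod_range_succ, binC]

lemma binC_eq_choose (σ : ℝ) (m : ℕ) : binC σ m = (-1) ^ m * Ring.choose (-σ) m := by
  induction m with
  | zero => simp [binC]
  | succ m ih =>
    rw [binC_succ, ih, Ring.choose_eq_smul, Ring.choose_eq_smul, descPochhammer_succ_right,
      Polynomial.smeval_mul]
    have h1 : ((m + 1).factorial : ℝ) = (m + 1) * m.factorial := by
      push_cast [Nat.factorial_succ]; ring
    have h2 : ((m.factorial : ℕ) : ℝ) ≠ 0 := by positivity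
    have h3 : (m : ℝ) + 1 ≠ 0 := by positivity
    simp only [Polynomial.smeval_sub, Polynomial.smeval_X, Polynomial.smeval_natCast, h1,
      smul_eq_mul]
    field_simp
    simp
    ring

/-- Chu–Vandermonde, i.e. `(1 - X)^(-x) (1 - X)^(-y) = (1 - X)^(-(x+y))`. -/
lemma binC_add (x y : ℝ) (m : ℕ) :
    ∑ ij ∈ Finset.HasAntidiagonal.antidiagonal m, binC x ij.1 * binC y ij.2 = binC (x + y) m := by
  rw [binC_eq_choose, neg_add, Ring.add_choose_eq m (Commute.all _ _), Finset.mul_sum]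
  refine Finset.sum_congr rfl fun ij hij => ?_
  rw [binC_eq_choose, binC_eq_choose, ← Finset.HasAntidiagonal.mem_antidiagonal.mp hij, pow_add]
  ring

lemma binC_nonneg {σ : ℝ} (hσ : 0 ≤ σ) (m : ℕ) : 0 ≤ binC σ m :=
  Finset.prod_nonneg fun i _ => by positivity

lemma binC_zero_left (m : ℕ) : binC 0 (m + 1) = 0 := by
  simp [binC, Finset.prod_range_succ']

/-- For `0 < μ < 1` all coefficients of `(1 - X)^μ` but the constant one are nonpositive. -/
lemma binC_neg_nonpos {μ : ℝ} (h0 : 0 < μ) (h1 : μ < 1) (m : ℕ) : binC (-μ) (m + 1) ≤ 0 := by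
  unfold binC
  rw [Finset.prod_range_succ']
  refine mul_nonpos_of_nonneg_of_nonpos (Finset.prod_nonneg fun i _ => ?_) ?_
  · refine div_nonneg ?_ (by positivity)
    have : (0 : ℝ) ≤ i := Nat.cast_nonneg i
    push_cast; linarith
  · simp; linarith

lemma binC_le_pow {σ : ℝ} (hσ : 0 < σ) (m : ℕ) : binC σ m ≤ (σ + 1) ^ m := by
  have : (σ + 1) ^ m = ∏ i ∈ Finset.range m, (σ + 1) := by simp
  rw [this]
  refine Finset.prod_le_prod (fun i _ => by positivity) fun i _ => ?_
  rw [div_le_iff₀ (by positivity)]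
  have : (0 : ℝ) ≤ i := Nat.cast_nonneg i
  nlinarith [mul_nonneg hσ.le this]

lemma binC_le_exp {σ : ℝ} (hσ : 0 < σ) (m : ℕ) : binC σ m ≤ m.factorial * Real.exp (σ + 1) := by
  refine (binC_le_pow hσ m).trans ?_
  have := Real.pow_div_factorial_le_exp (σ + 1) (by positivity) m
  rwa [div_le_iff₀' (by positivity)] at this

lemma binC_add_one (σ : ℝ) (m : ℕ) : binC (σ + 1) m * σ = binC σ m * (σ + m) := by
  induction m with
  | zero => simp [binC]
  | succ m ih =>
    rw [binC_succ, binC_succ]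
    have h3 : (m : ℝ) + 1 ≠ 0 := by positivity
    push_cast
    field_simp
    linear_combination (σ + 1 + m) * ih

lemma binC_scaled_antitone {s : ℝ} (hs : 0 ≤ s) {K m : ℕ} (hK : 1 ≤ K) (hm : K ≤ m) :
    (m : ℝ) ^ (-s) * binC (s + 1) m ≤ (K : ℝ) ^ (-s) * binC (s + 1) K := by
  induction m, hm using Nat.le_induction with
  | base => exact le_rfl
  | succ m hm ih =>
    refine le_trans ?_ ih
    have hm0 : (0 : ℝ) < m := by exact_mod_cast (by omega : 0 < m)
    have hb := binC_nonneg (by linarith : 0 ≤ s + 1) m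
    have key : (1 + s / (m + 1)) * (m : ℝ) ^ s ≤ ((m : ℝ) + 1) ^ s := by
      have h1 : 1 + s / (m + 1) ≤ Real.exp (s / (m + 1)) := by
        linarith [Real.add_one_le_exp (s / ((m : ℝ) + 1))]
      have h2 : (m + 1 : ℝ) ^ s = (1 + 1 / m : ℝ) ^ s * (m : ℝ) ^ s := by
        rw [← Real.mul_rpow (by positivity) hm0.le]
        congr 1; field_simp; try ring
      have h3 : Real.exp (s / (m + 1)) ≤ (1 + 1 / m : ℝ) ^ s := by
        rw [Real.rpow_def_of_pos (by positivity)]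
        refine Real.exp_le_exp.mpr ?_
        have := Real.one_sub_inv_le_log_of_pos (by positivity : (0 : ℝ) < 1 + 1 / m)
        have h4 : 1 - (1 + 1 / (m : ℝ))⁻¹ = 1 / (m + 1) := by field_simp; ring
        rw [h4] at this
        calc s / (m + 1) = s * (1 / (m + 1)) := by ring
          _ ≤ s * Real.log (1 + 1 / m) := by gcongr
          _ = _ := by ring
      rw [h2]
      gcongr
      exact h1.trans h3
    rw [binC_succ, Real.rpow_neg (by positivity), Real.rpow_neg (by positivity)]
    push_cast
    have e1 : (s + 1 + m) / (m + 1 : ℝ) = 1 + s / (m + 1) := by field_simp; ring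
    rw [e1, inv_mul_le_iff₀ (by positivity)]
    calc binC (s + 1) m * (1 + s / (m + 1))
        = ((1 + s / (m + 1)) * (m : ℝ) ^ s) * ((m : ℝ) ^ s)⁻¹ * binC (s + 1) m := by
          field_simp
      _ ≤ ((m : ℝ) + 1) ^ s * ((m : ℝ) ^ s)⁻¹ * binC (s + 1) m := by gcongr
      _ = _ := by ring

/-- A bound on `m^(1-σ) binC σ m` that is uniform in `m ≥ K` and decays in `σ` like `(e/K)^σ`.
As `K` can be taken arbitrarily large, it dominates the series `∑ y^j m^(1-σ-jμ) binC (σ+jμ) m`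
for every `y`. -/
lemma binC_scaled_le {σ : ℝ} (hσ : 0 < σ) {K m : ℕ} (hK : 1 ≤ K) (hm : K ≤ m) :
    (m : ℝ) ^ (1 - σ) * binC σ m ≤
      (K + 1).factorial * Real.exp 2 * (Real.exp σ * (K : ℝ) ^ (-σ)) := by
  have hm0 : (0 : ℝ) < m := by exact_mod_cast (by omega : 0 < m)
  have hK0 : (0 : ℝ) < K := by exact_mod_cast (by omega : 0 < K)
  have h1 := binC_scaled_antitone hσ.le hK hm
  have h2 := binC_le_pow (by linarith : 0 < σ + 1) K
  have h3 := binC_add_one σ m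
  have hb := binC_nonneg hσ.le m
  have hb1 := binC_nonneg (by linarith : 0 ≤ σ + 1) m
  have h4 : (m : ℝ) ^ (1 - σ) * binC σ m ≤ (σ + 2) * ((m : ℝ) ^ (-σ) * binC (σ + 1) m) := by
    have : (m : ℝ) ^ (1 - σ) = m * (m : ℝ) ^ (-σ) := by
      rw [sub_eq_add_neg, Real.rpow_add hm0, Real.rpow_one]
    rw [this]
    have h5 : m * binC σ m ≤ (σ + 2) * binC (σ + 1) m := by nlinarith
    have h6 : 0 ≤ (m : ℝ) ^ (-σ) := by positivity
    nlinarith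
  have h7 : (σ + 2) ^ (K + 1) ≤ (K + 1).factorial * Real.exp (σ + 2) := by
    have := Real.pow_div_factorial_le_exp (σ + 2) (by positivity) (K + 1)
    rwa [div_le_iff₀' (by positivity)] at this
  calc _ ≤ (σ + 2) * ((m : ℝ) ^ (-σ) * binC (σ + 1) m) := h4
    _ ≤ (σ + 2) * ((K : ℝ) ^ (-σ) * (σ + 1 + 1) ^ K) := by
        refine mul_le_mul_of_nonneg_left (h1.trans ?_) (by positivity)
        exact mul_le_mul_of_nonneg_left h2 (by positivity)
    _ = (σ + 2) ^ (K + 1) * (K : ℝ) ^ (-σ) := by rw [pow_succ]; ring_nf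
    _ ≤ (K + 1).factorial * Real.exp (σ + 2) * (K : ℝ) ^ (-σ) := by gcongr
    _ = _ := by rw [Real.exp_add]; ring

/-- Euler's limit formula for `1/Γ`. -/
lemma binC_scaled_tendsto {σ : ℝ} (hσ : 0 < σ) :
    Tendsto (fun m : ℕ => (m : ℝ) ^ (1 - σ) * binC σ m) atTop (nhds (1 / Real.Gamma σ)) := by
  have h1 := (Real.GammaSeq_tendsto_Gamma σ).inv₀ (Real.Gamma_pos_of_pos hσ).ne'
  have h2 := (tendsto_natCast_div_add_atTop (𝕜 := ℝ) σ).mul h1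
  rw [one_mul, ← one_div] at h2
  refine h2.congr' ?_
  filter_upwards [eventually_gt_atTop 0] with m hm
  have hm0 : (0 : ℝ) < m := by exact_mod_cast hm
  have : (∏ j ∈ Finset.range m, (σ + j)) = binC σ m * m.factorial := by
    unfold binC
    rw [Finset.prod_div_distrib, ← Finset.prod_range_add_one_eq_factorial]
    push_cast
    rw [div_mul_cancel₀]
    exact Finset.prod_ne_zero_iff.mpr fun i _ => by positivity
  rw [Real.GammaSeq, Finset.prod_range_succ, this, Real.rpow_sub hm0, Real.rpow_one]
  have : (m : ℝ) + σ ≠ 0 := by positivity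
  have : σ + (m : ℝ) ≠ 0 := by positivity
  field_simp
  ring

/-! ### A bound for Mittag-Leffler sums on the imaginary axis -/

lemma disc_summable {μ σ θ : ℝ} (hμ : 0 < μ) (hσ : 0 < σ) (hθ : 0 ≤ θ)
    (hθ1 : θ * Real.exp μ < 1) (m : ℕ) :
    Summable (fun j : ℕ => (θ * Complex.I) ^ j * (binC (σ + j * μ) m : ℂ)) := by
  refine Summable.of_norm_bounded
    (g := fun j : ℕ => (m.factorial * Real.exp (σ + 1)) * (θ * Real.exp μ) ^ j)
    ((summable_geometric_of_lt_one (by positivity) hθ1).mul_left _) fun j => ?_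
  have hj : 0 < σ + j * μ := by positivity
  rw [norm_mul, norm_pow, norm_mul, Complex.norm_I, mul_one, Complex.norm_real, Complex.norm_real,
    Real.norm_of_nonneg hθ, Real.norm_of_nonneg (binC_nonneg hj.le m)]
  calc θ ^ j * binC (σ + j * μ) m ≤ θ ^ j * (m.factorial * Real.exp (σ + j * μ + 1)) := by
        gcongr; exact binC_le_exp hj m
    _ = _ := by
        rw [show σ + j * μ + 1 = (σ + 1) + j * μ by ring, Real.exp_add, Real.exp_nat_mul, mul_pow]
        ring

/-- The discrete analogue of `∑ (iy)^j / Γ(σ + jμ)`: the coefficient of `X^m` in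
`∑ (iθ)^j (1 - X)^(-(σ + jμ))`.  The sum converges when `θ e^μ < 1` (`disc_summable`). -/
noncomputable def discH (μ σ θ : ℝ) (m : ℕ) : ℂ :=
  ∑' j : ℕ, (θ * Complex.I) ^ j * (binC (σ + j * μ) m : ℂ)

/-- Coefficientwise form of `(1 - X)^μ H = (1 - X)^(μ-σ) + iθ H`. -/
lemma disc_recurrence {μ σ θ : ℝ} (hμ : 0 < μ) (hσ : 0 < σ) (hθ : 0 ≤ θ)
    (hθ1 : θ * Real.exp μ < 1) (m : ℕ) :
    ∑ ik ∈ Finset.HasAntidiagonal.antidiagonal m, (binC (-μ) ik.1 : ℂ) * discH μ σ θ ik.2 =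
      binC (σ - μ) m + θ * Complex.I * discH μ σ θ m := by
  have hs : ∀ k, HasSum (fun j : ℕ => (θ * Complex.I) ^ j * (binC (σ + j * μ) k : ℂ))
      (discH μ σ θ k) := fun k => (disc_summable hμ hσ hθ hθ1 k).hasSum
  have h1 : HasSum (fun j : ℕ => ∑ ik ∈ Finset.HasAntidiagonal.antidiagonal m,
      (binC (-μ) ik.1 : ℂ) * ((θ * Complex.I) ^ j * (binC (σ + j * μ) ik.2 : ℂ)))
      (∑ ik ∈ Finset.HasAntidiagonal.antidiagonal m, (binC (-μ) ik.1 : ℂ) * discH μ σ θ ik.2) :=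
    hasSum_sum fun ik _ => (hs ik.2).mul_left _
  have key : ∀ j : ℕ, ∑ ik ∈ Finset.HasAntidiagonal.antidiagonal m, (binC (-μ) ik.1 : ℂ) *
      ((θ * Complex.I) ^ j * (binC (σ + j * μ) ik.2 : ℂ)) =
      (θ * Complex.I) ^ j * (binC (σ - μ + j * μ) m : ℂ) := by
    intro j
    rw [show σ - μ + j * μ = -μ + (σ + j * μ) by ring, ← binC_add]
    push_cast
    rw [Finset.mul_sum]
    exact Finset.sum_congr rfl fun _ _ => by ring
  rw [funext key] at h1
  refine h1.unique ?_
  rw [← hasSum_nat_add_iff' 1]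
  simp only [Finset.sum_range_one, pow_zero, Nat.cast_zero, zero_mul, add_zero, one_mul,
    add_sub_cancel_left]
  refine ((hs m).mul_left (θ * Complex.I)).congr_fun ?_
  intro j
  rw [show σ - μ + ((j + 1 : ℕ) : ℝ) * μ = σ + j * μ by push_cast; ring, pow_succ]
  ring

/-- The recurrence expresses `(1 - iθ) H m` as a combination with nonnegative weights of the earlier
`H k` plus a nonnegative constant, and `binC σ` satisfies the same recurrence with `θ = 0`. -/
lemma disc_bound {μ σ θ : ℝ} (hμ : 0 < μ) (hμ1 : μ < 1) (hσ : μ ≤ σ) (hθ : 0 ≤ θ)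
    (hθ1 : θ * Real.exp μ < 1) (m : ℕ) :
    ‖discH μ σ θ m‖ ≤ binC σ m := by
  have hσ0 : 0 < σ := hμ.trans_le hσ
  induction m using Nat.strong_induction_on with
  | _ m ih =>
  have hrec := disc_recurrence hμ hσ0 hθ hθ1 m
  set H : ℕ → ℂ := discH μ σ θ with hH
  change ∑ ik ∈ Finset.HasAntidiagonal.antidiagonal m, (binC (-μ) ik.1 : ℂ) * H ik.2 =
    binC (σ - μ) m + θ * Complex.I * H m at hrec
  change ‖H m‖ ≤ binC σ m
  replace ih : ∀ k < m, ‖H k‖ ≤ binC σ k := ih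
  -- `|1 - iθ| ≥ 1` because its real part is `1`
  have hn : ‖H m‖ ≤ ‖(1 - θ * Complex.I) * H m‖ := by
    rw [norm_mul]
    have : 1 ≤ ‖(1 - θ * Complex.I : ℂ)‖ := by
      have := Complex.abs_re_le_norm (1 - θ * Complex.I)
      simpa using this
    nlinarith [norm_nonneg (H m)]
  refine hn.trans ?_
  have hvan := binC_add (-μ) σ m
  rw [show -μ + σ = σ - μ by ring] at hvan
  cases m with
  | zero =>
    simp only [Finset.Nat.antidiagonal_zero, Finset.sum_singleton, binC_zero_right] at hrec ⊢
    have : (1 - θ * Complex.I) * H 0 = 1 := by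
      push_cast at hrec; linear_combination hrec
    simp [this]
  | succ n =>
    rw [Finset.Nat.sum_antidiagonal_succ] at hrec hvan
    simp only [binC_zero_right, Complex.ofReal_one, one_mul] at hrec hvan
    have e : (1 - θ * Complex.I) * H (n + 1) = binC (σ - μ) (n + 1) +
        ∑ ik ∈ Finset.HasAntidiagonal.antidiagonal n, ((-binC (-μ) (ik.1 + 1) : ℝ) : ℂ) * H ik.2 := by
      push_cast
      simp only [neg_mul, Finset.sum_neg_distrib]
      linear_combination hrec
    rw [e]
    refine (norm_add_le _ _).trans ?_
    rw [Complex.norm_real, Real.norm_of_nonneg (binC_nonneg (by linarith) _)]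
    have : ‖∑ ik ∈ Finset.HasAntidiagonal.antidiagonal n,
        ((-binC (-μ) (ik.1 + 1) : ℝ) : ℂ) * H ik.2‖ ≤
        ∑ ik ∈ Finset.HasAntidiagonal.antidiagonal n, -binC (-μ) (ik.1 + 1) * binC σ ik.2 := by
      refine norm_sum_le_of_le _ fun ik hik => ?_
      have hnn : 0 ≤ -binC (-μ) (ik.1 + 1) := by linarith [binC_neg_nonpos hμ hμ1 ik.1]
      rw [norm_mul, Complex.norm_real, Real.norm_of_nonneg hnn]
      refine mul_le_mul_of_nonneg_left (ih _ ?_) hnn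
      have := Finset.HasAntidiagonal.mem_antidiagonal.mp hik
      omega
    simp only [neg_mul, Finset.sum_neg_distrib] at this
    linarith

lemma exists_nat_rpow_gt {μ : ℝ} (hμ : 0 < μ) (y : ℝ) :
    ∃ K : ℕ, 1 ≤ K ∧ y < (K : ℝ) ^ μ := by
  have := ((tendsto_rpow_atTop hμ).comp tendsto_natCast_atTop_atTop).eventually_gt_atTop y
  obtain ⟨K, h1, h2⟩ := (this.and (eventually_ge_atTop 1)).exists
  exact ⟨K, h2, h1⟩

lemma binC_scaled_le_geom {μ σ y : ℝ} (hμ : 0 < μ) (hσ : 0 < σ) (hy : 0 ≤ y)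
    {K m : ℕ} (hK : 1 ≤ K) (hm : K ≤ m) (j : ℕ) :
    y ^ j * ((m : ℝ) ^ (1 - (σ + j * μ)) * binC (σ + j * μ) m) ≤
      ((K + 1).factorial * Real.exp 2 * (Real.exp σ * (K : ℝ) ^ (-σ))) *
        (y * Real.exp μ / (K : ℝ) ^ μ) ^ j := by
  have hK0 : (0 : ℝ) < K := by exact_mod_cast (by omega : 0 < K)
  have hj : 0 < σ + j * μ := by positivity
  calc _ ≤ y ^ j * ((K + 1).factorial * Real.exp 2 *
        (Real.exp (σ + j * μ) * (K : ℝ) ^ (-(σ + j * μ)))) := by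
        exact mul_le_mul_of_nonneg_left (binC_scaled_le hj hK hm) (by positivity)
    _ = _ := by
        rw [Real.exp_add, Real.exp_nat_mul, neg_add, Real.rpow_add hK0, div_pow, mul_pow,
          mul_comm (j : ℝ) μ, ← mul_neg, Real.rpow_mul hK0.le,
          Real.rpow_neg (by positivity : (0 : ℝ) ≤ (K : ℝ) ^ μ), Real.rpow_natCast]
        field_simp

/-- Absolute convergence of Mittag-Leffler series, by letting `m → ∞` in `binC_scaled_le_geom`. -/
lemma summable_ml {μ σ y : ℝ} (hμ : 0 < μ) (hσ : 0 < σ) (hy : 0 ≤ y) :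
    Summable (fun j : ℕ => y ^ j / Real.Gamma (σ + j * μ)) := by
  obtain ⟨K, hK, hyK⟩ := exists_nat_rpow_gt hμ (y * Real.exp μ)
  have hK0 : (0 : ℝ) < K := by exact_mod_cast (by omega : 0 < K)
  refine Summable.of_nonneg_of_le (fun j => ?_) (fun j => ?_)
    ((summable_geometric_of_lt_one (r := y * Real.exp μ / (K : ℝ) ^ μ) (by positivity)
      ((div_lt_one (by positivity)).mpr hyK)).mul_left
        ((K + 1).factorial * Real.exp 2 * (Real.exp σ * (K : ℝ) ^ (-σ))))
  · have := Real.Gamma_pos_of_pos (by positivity : 0 < σ + j * μ)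
    positivity
  · rw [div_eq_mul_one_div]
    refine le_of_tendsto ((binC_scaled_tendsto (by positivity : 0 < σ + j * μ)).const_mul _) ?_
    filter_upwards [eventually_ge_atTop K] with m hm
    exact binC_scaled_le_geom hμ hσ hy hK hm j

/-- On the imaginary axis the Mittag-Leffler function `E_{μ,σ}`, `σ ≥ μ`, is bounded by its value
`1/Γ(σ)` at the origin; obtained from `disc_bound` with `θ = y / m^μ` as `m → ∞`. -/
lemma norm_ml_le {μ σ y : ℝ} (hμ : 0 < μ) (hμ1 : μ < 1) (hσ : μ ≤ σ) (hy : 0 ≤ y) :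
    ‖∑' j : ℕ, (y * Complex.I) ^ j * ((1 / Real.Gamma (σ + j * μ) : ℝ) : ℂ)‖ ≤
      1 / Real.Gamma σ := by
  have hσ0 : 0 < σ := hμ.trans_le hσ
  obtain ⟨K, hK, hyK⟩ := exists_nat_rpow_gt hμ (y * Real.exp μ)
  have hK0 : (0 : ℝ) < K := by exact_mod_cast (by omega : 0 < K)
  have hT : Tendsto (fun m : ℕ => ∑' j : ℕ, (y * Complex.I) ^ j *
      (((m : ℝ) ^ (1 - (σ + j * μ)) * binC (σ + j * μ) m : ℝ) : ℂ)) atTop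
      (nhds (∑' j : ℕ, (y * Complex.I) ^ j * ((1 / Real.Gamma (σ + j * μ) : ℝ) : ℂ))) := by
    refine tendsto_tsum_of_dominated_convergence
      (bound := fun j => ((K + 1).factorial * Real.exp 2 * (Real.exp σ * (K : ℝ) ^ (-σ))) *
        (y * Real.exp μ / (K : ℝ) ^ μ) ^ j)
      ((summable_geometric_of_lt_one (by positivity)
        ((div_lt_one (by positivity)).mpr hyK)).mul_left _) (fun j => ?_) ?_
    · refine Tendsto.const_mul _ ?_
      exact (Complex.continuous_ofReal.tendsto _).comp
        (binC_scaled_tendsto (by positivity : 0 < σ + j * μ))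
    · filter_upwards [eventually_ge_atTop K] with m hm j
      have hj : 0 < σ + j * μ := by positivity
      have hnn := binC_nonneg hj.le m
      rw [norm_mul, norm_pow, norm_mul, Complex.norm_I, mul_one, Complex.norm_real,
        Complex.norm_real, Real.norm_of_nonneg hy, Real.norm_of_nonneg (by positivity)]
      exact binC_scaled_le_geom hμ hσ0 hy hK hm j
  refine le_of_tendsto_of_tendsto hT.norm (binC_scaled_tendsto hσ0) ?_
  filter_upwards [eventually_ge_atTop K] with m hm
  have hm0 : (0 : ℝ) < m := by exact_mod_cast (by omega : 0 < m)
  have hKm : (K : ℝ) ^ μ ≤ (m : ℝ) ^ μ := by gcongr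
  have hb := disc_bound (θ := y / (m : ℝ) ^ μ) hμ hμ1 hσ (by positivity)
    (by rw [div_mul_eq_mul_div, div_lt_one (by positivity)]; linarith) m
  have e : ∀ j : ℕ, (y * Complex.I) ^ j *
      (((m : ℝ) ^ (1 - (σ + j * μ)) * binC (σ + j * μ) m : ℝ) : ℂ) =
      (((m : ℝ) ^ (1 - σ) : ℝ) : ℂ) *
        (((y / (m : ℝ) ^ μ : ℝ) * Complex.I) ^ j * (binC (σ + j * μ) m : ℂ)) := by
    intro j
    have : (m : ℝ) ^ (1 - (σ + j * μ)) = (m : ℝ) ^ (1 - σ) / ((m : ℝ) ^ μ) ^ j := by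
      rw [← Real.rpow_natCast, ← Real.rpow_mul hm0.le, ← Real.rpow_sub hm0]
      congr 1; ring
    rw [this, mul_pow, mul_pow, ← Complex.ofReal_pow, ← Complex.ofReal_pow, div_pow]
    push_cast
    field_simp
  simp_rw [e]
  rw [tsum_mul_left, ← discH, norm_mul, Complex.norm_real, Real.norm_of_nonneg (by positivity)]
  gcongr

/-! ### The real Mittag-Leffler function: positivity and decay -/

/-- The two-parameter Mittag-Leffler function `E_{α,σ}(-x)`, for real `x`. -/
noncomputable def mlr (α σ x : ℝ) : ℝ := ∑' j : ℕ, (-x) ^ j / Real.Gamma (σ + j * α)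

lemma mlr_hasSum {α σ : ℝ} (hα : 0 < α) (hσ : 0 < σ) (x : ℝ) :
    HasSum (fun j : ℕ => (-x) ^ j / Real.Gamma (σ + j * α)) (mlr α σ x) := by
  refine Summable.hasSum (Summable.of_norm ?_)
  refine (summable_ml hα hσ (abs_nonneg x)).congr fun j => ?_
  rw [norm_div, norm_pow, norm_neg, Real.norm_eq_abs,
    Real.norm_of_nonneg (Real.Gamma_pos_of_pos (by positivity : 0 < σ + j * α)).le]

lemma mlr_recurrence {α σ : ℝ} (hα : 0 < α) (hσ : 0 < σ) (x : ℝ) :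
    mlr α σ x = 1 / Real.Gamma σ - x * mlr α (σ + α) x := by
  refine (mlr_hasSum hα hσ x).unique ?_
  rw [← hasSum_nat_add_iff' 1]
  simp only [Finset.sum_range_one, pow_zero, Nat.cast_zero, zero_mul, add_zero]
  rw [sub_sub_cancel_left, ← neg_mul]
  refine ((mlr_hasSum hα (by linarith : 0 < σ + α) x).mul_left (-x)).congr_fun fun j => ?_
  rw [show σ + ((j + 1 : ℕ) : ℝ) * α = σ + α + j * α by push_cast; ring, pow_succ]
  ring

/-- The real and imaginary parts of `E_{μ,σ}(iy)` are Mittag-Leffler functions of order `2μ`. -/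
lemma mlr_complex {μ σ : ℝ} (hμ : 0 < μ) (hσ : 0 < σ) (y : ℝ) :
    HasSum (fun j : ℕ => (y * Complex.I) ^ j * ((1 / Real.Gamma (σ + j * μ) : ℝ) : ℂ))
      ((mlr (2 * μ) σ (y ^ 2) : ℂ) + ((y * mlr (2 * μ) (σ + μ) (y ^ 2) : ℝ) : ℂ) * Complex.I) := by
  have hsq : (y * Complex.I) ^ 2 = ((-(y ^ 2) : ℝ) : ℂ) := by
    rw [mul_pow, Complex.I_sq]; push_cast; ring
  refine HasSum.even_add_odd ?_ ?_
  · have := (Complex.hasSum_ofReal).mpr (mlr_hasSum (by positivity : 0 < 2 * μ) hσ (y ^ 2))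
    refine this.congr_fun fun j => ?_
    rw [pow_mul, hsq, show σ + ((2 * j : ℕ) : ℝ) * μ = σ + j * (2 * μ) by push_cast; ring]
    push_cast
    ring
  · have := ((Complex.hasSum_ofReal).mpr ((mlr_hasSum (by positivity : 0 < 2 * μ)
      (by positivity : 0 < σ + μ) (y ^ 2)).mul_left y)).mul_right Complex.I
    refine this.congr_fun fun j => ?_
    rw [pow_succ, pow_mul, hsq,
      show σ + ((2 * j + 1 : ℕ) : ℝ) * μ = σ + μ + j * (2 * μ) by push_cast; ring]
    push_cast
    ring

lemma mlr_norm_le {μ σ : ℝ} (hμ : 0 < μ) (hμ1 : μ < 1) (hσ : μ ≤ σ) {y : ℝ} (hy : 0 ≤ y) :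
    mlr (2 * μ) σ (y ^ 2) ≤ 1 / Real.Gamma σ ∧
      |y * mlr (2 * μ) (σ + μ) (y ^ 2)| ≤ 1 / Real.Gamma σ := by
  have h := norm_ml_le hμ hμ1 hσ hy
  rw [(mlr_complex hμ (hμ.trans_le hσ) y).tsum_eq] at h
  constructor
  · have := (Complex.re_le_norm _).trans h
    simpa using this
  · have := (Complex.abs_im_le_norm _).trans h
    simpa using this

lemma mlr_nonneg {μ σ : ℝ} (hμ : 0 < μ) (hμ1 : μ < 1) (hσ : μ ≤ σ) {x : ℝ} (hx : 0 ≤ x) :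
    0 ≤ mlr (2 * μ) (σ + 2 * μ) x := by
  have hσ0 : 0 < σ := hμ.trans_le hσ
  rcases hx.eq_or_lt with rfl | hx0
  · have := mlr_recurrence (by positivity : 0 < 2 * μ) (by positivity : 0 < σ + 2 * μ) 0
    rw [this, zero_mul, sub_zero]
    exact (one_div_pos.mpr (Real.Gamma_pos_of_pos (by positivity))).le
  · have h := (mlr_norm_le hμ hμ1 hσ (Real.sqrt_nonneg x)).1
    rw [Real.sq_sqrt hx, mlr_recurrence (by positivity) hσ0] at h
    by_contra hneg
    push Not at hneg
    linarith [mul_neg_of_pos_of_neg hx0 hneg]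

lemma mlr_abs_le {μ σ : ℝ} (hμ : 0 < μ) (hμ1 : μ < 1) (hσ : μ ≤ σ) {x : ℝ} (hx : 0 < x) :
    |mlr (2 * μ) (σ + μ) x| ≤ 1 / Real.Gamma σ / √x := by
  have h := (mlr_norm_le hμ hμ1 hσ (Real.sqrt_nonneg x)).2
  rw [Real.sq_sqrt hx.le, abs_mul, abs_of_nonneg (Real.sqrt_nonneg x)] at h
  rwa [le_div_iff₀' (Real.sqrt_pos.mpr hx)]

/-! ### The semigroup law for Riemann–Liouville integrals -/

/-- Euler's beta integral on `[0, a]`. -/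
lemma beta_integral_zero {σ τ a : ℝ} (hσ : 0 < σ) (hτ : 0 < τ) (ha : 0 < a) :
    ∫ x in (0 : ℝ)..a, (a - x) ^ (σ - 1) * x ^ (τ - 1) =
      Real.Gamma σ * Real.Gamma τ / Real.Gamma (σ + τ) * a ^ (σ + τ - 1) := by
  have h := Complex.betaIntegral_scaled (τ : ℂ) (σ : ℂ) ha
  rw [Complex.betaIntegral_eq_Gamma_mul_div _ _ (by simpa) (by simpa)] at h
  have e : ∫ x in (0 : ℝ)..a, (x : ℂ) ^ ((τ : ℂ) - 1) * ((a : ℂ) - x) ^ ((σ : ℂ) - 1) =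
      ∫ x in (0 : ℝ)..a, (((a - x) ^ (σ - 1) * x ^ (τ - 1) : ℝ) : ℂ) := by
    refine intervalIntegral.integral_congr fun x hx => ?_
    rw [Set.uIcc_of_le ha.le] at hx
    rw [Complex.ofReal_mul, Complex.ofReal_cpow (by linarith [hx.2]), Complex.ofReal_cpow hx.1]
    push_cast
    ring
  rw [e, intervalIntegral.integral_ofReal] at h
  apply Complex.ofReal_injective
  rw [h]
  have e2 : (τ : ℂ) + σ - 1 = ((σ + τ - 1 : ℝ) : ℂ) := by push_cast; ring
  rw [e2, ← Complex.ofReal_cpow ha.le, ← Complex.ofReal_add, Complex.Gamma_ofReal,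
    Complex.Gamma_ofReal, Complex.Gamma_ofReal, add_comm τ σ]
  push_cast
  ring

lemma beta_integral {σ τ r t : ℝ} (hσ : 0 < σ) (hτ : 0 < τ) (h : r < t) :
    ∫ s in r..t, (t - s) ^ (σ - 1) * (s - r) ^ (τ - 1) =
      Real.Gamma σ * Real.Gamma τ / Real.Gamma (σ + τ) * (t - r) ^ (σ + τ - 1) := by
  rw [← beta_integral_zero hσ hτ (sub_pos.mpr h)]
  have := intervalIntegral.integral_comp_sub_right
    (fun x => (t - r - x) ^ (σ - 1) * x ^ (τ - 1)) r (a := r) (b := t)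
  simp only [sub_self] at this
  rw [← this]
  refine intervalIntegral.integral_congr fun x _ => ?_
  simp

lemma beta_intervalIntegrable {σ τ r t : ℝ} (hσ : 0 < σ) (hτ : 0 < τ) (h : r < t) :
    IntervalIntegrable (fun s => (t - s) ^ (σ - 1) * (s - r) ^ (τ - 1)) volume r t := by
  apply intervalIntegral.intervalIntegrable_of_integral_ne_zero
  rw [beta_integral hσ hτ h]
  have h1 := Real.Gamma_pos_of_pos hσ
  have h2 := Real.Gamma_pos_of_pos hτ
  have h3 := Real.Gamma_pos_of_pos (add_pos hσ hτ)
  have h4 : 0 < t - r := by linarith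
  positivity

lemma slice_integral {t r : ℝ} (hr : 0 ≤ r) (hrt : r ≤ t) (g : ℝ → ℝ) :
    ∫ s, (Set.Ioi r).indicator g s ∂(volume.restrict (Set.Ioc 0 t)) = ∫ s in r..t, g s := by
  rw [integral_indicator measurableSet_Ioi, Measure.restrict_restrict measurableSet_Ioi,
    intervalIntegral.integral_of_le hrt]
  congr 2
  ext x
  simp only [Set.mem_inter_iff, Set.mem_Ioi, Set.mem_Ioc]
  constructor
  · rintro ⟨h1, h2, h3⟩; exact ⟨h1, h3⟩
  · rintro ⟨h1, h2⟩; exact ⟨h1, hr.trans_lt h1, h2⟩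

/-- The semigroup law `I^σ I^τ f = I^(σ+τ) f`, by Fubini and the beta integral. -/
lemma rlInt_comp {σ τ t : ℝ} (hσ : 0 < σ) (hτ : 0 < τ) (ht : 0 ≤ t) {f : ℝ → ℝ}
    (hm : AEStronglyMeasurable f (volume.restrict (Set.Ioc 0 t)))
    (hf : IntervalIntegrable (fun s => (t - s) ^ (σ + τ - 1) * f s) volume 0 t) :
    rlInt σ (rlInt τ f) t = rlInt (σ + τ) f t := by
  set ν := volume.restrict (Set.Ioc (0 : ℝ) t) with hν
  set F : ℝ → ℝ → ℝ := fun s r =>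
    (Set.Ioi r).indicator (fun s => (t - s) ^ (σ - 1) * (s - r) ^ (τ - 1)) s * f r with hF
  set B := Real.Gamma σ * Real.Gamma τ / Real.Gamma (σ + τ) with hB
  have h1 := Real.Gamma_pos_of_pos hσ
  have h2 := Real.Gamma_pos_of_pos hτ
  have h3 := Real.Gamma_pos_of_pos (add_pos hσ hτ)
  have hB0 : 0 < B := by positivity
  have hmem : ∀ᵐ r ∂ν, r ∈ Set.Ioc (0 : ℝ) t := ae_restrict_mem measurableSet_Ioc
  have hne : ∀ᵐ r ∂ν, r ≠ t := ae_restrict_of_ae (Measure.ae_ne volume t)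
  have hmeas : AEStronglyMeasurable (Function.uncurry F) (ν.prod ν) := by
    refine AEStronglyMeasurable.mul ?_ hm.comp_snd
    refine Measurable.aestronglyMeasurable ?_
    have : (fun p : ℝ × ℝ => (Set.Ioi p.2).indicator
        (fun s => (t - s) ^ (σ - 1) * (s - p.2) ^ (τ - 1)) p.1) =
        Set.indicator {p : ℝ × ℝ | p.2 < p.1}
          (fun p => (t - p.1) ^ (σ - 1) * (p.1 - p.2) ^ (τ - 1)) := by
      ext p
      simp [Set.indicator]
    change Measurable (fun p : ℝ × ℝ => (Set.Ioi p.2).indicator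
        (fun s => (t - s) ^ (σ - 1) * (s - p.2) ^ (τ - 1)) p.1)
    rw [this]
    refine Measurable.indicator ?_ (measurableSet_lt measurable_snd measurable_fst)
    fun_prop
  have hInt : Integrable (Function.uncurry F) (ν.prod ν) := by
    rw [integrable_prod_iff' hmeas]
    constructor
    · filter_upwards [hmem, hne] with r hr hrt
      have hlt : r < t := lt_of_le_of_ne hr.2 hrt
      suffices h : Integrable ((Set.Ioi r).indicator
          (fun s => (t - s) ^ (σ - 1) * (s - r) ^ (τ - 1))) ν from h.mul_const (f r)
      rw [integrable_indicator_iff measurableSet_Ioi]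
      have := (beta_intervalIntegrable hσ hτ hlt)
      rw [intervalIntegrable_iff_integrableOn_Ioc_of_le hlt.le] at this
      rw [IntegrableOn, Measure.restrict_restrict measurableSet_Ioi]
      refine this.mono_set ?_
      rintro x ⟨hx1, hx2⟩
      exact ⟨hx1, hx2.2⟩
    · have hf' : Integrable (fun s => (t - s) ^ (σ + τ - 1) * f s) ν := by
        rwa [intervalIntegrable_iff_integrableOn_Ioc_of_le ht] at hf
      refine (hf'.norm.const_mul B).congr ?_
      filter_upwards [hmem, hne] with r hr hrt
      have hlt : r < t := lt_of_le_of_ne hr.2 hrt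
      have e : ∀ᵐ s ∂ν, ‖Function.uncurry F (s, r)‖ = (Set.Ioi r).indicator
          (fun s => (t - s) ^ (σ - 1) * (s - r) ^ (τ - 1)) s * ‖f r‖ := by
        filter_upwards [hmem] with s hs
        simp only [hF, Function.uncurry]
        rw [norm_mul, Real.norm_of_nonneg]
        refine Set.indicator_apply_nonneg fun h => ?_
        have h5 : 0 ≤ t - s := by linarith [hs.2]
        have h6 : 0 ≤ s - r := by linarith [Set.mem_Ioi.mp h]
        positivity
      rw [integral_congr_ae e, integral_mul_const, slice_integral hr.1.le hlt.le,
        beta_integral hσ hτ hlt, norm_mul, Real.norm_of_nonneg]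
      · ring
      · have h5 : 0 ≤ t - r := by linarith
        positivity
  have hswap := integral_integral_swap hInt
  have eL : ∫ s, ∫ r, F s r ∂ν ∂ν =
      ∫ s in (0 : ℝ)..t, (t - s) ^ (σ - 1) * ∫ r in (0 : ℝ)..s, (s - r) ^ (τ - 1) * f r := by
    rw [intervalIntegral.integral_of_le ht]
    refine integral_congr_ae ?_
    filter_upwards [hmem] with s hs
    have : ∀ r, F s r = (Set.Iio s).indicator
        (fun r => (t - s) ^ (σ - 1) * ((s - r) ^ (τ - 1) * f r)) r := by
      intro r
      simp only [hF, Set.indicator, Set.mem_Ioi, Set.mem_Iio]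
      split_ifs <;> ring
    simp_rw [this]
    rw [integral_indicator measurableSet_Iio, Measure.restrict_restrict measurableSet_Iio,
      integral_const_mul, intervalIntegral.integral_of_le hs.1.le, integral_Ioc_eq_integral_Ioo]
    congr 3
    ext x
    simp only [Set.mem_inter_iff, Set.mem_Iio, Set.mem_Ioc, Set.mem_Ioo]
    constructor
    · rintro ⟨h1, h2, h3⟩; exact ⟨h2, h1⟩
    · rintro ⟨h1, h2⟩; exact ⟨h2, h1, h2.le.trans hs.2⟩
  have eR : ∫ r, ∫ s, F s r ∂ν ∂ν = B * ∫ r in (0 : ℝ)..t, (t - r) ^ (σ + τ - 1) * f r := by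
    rw [intervalIntegral.integral_of_le ht, ← integral_const_mul]
    refine integral_congr_ae ?_
    filter_upwards [hmem, hne] with r hr hrt
    have hlt : r < t := lt_of_le_of_ne hr.2 hrt
    simp only [hF]
    rw [integral_mul_const, slice_integral hr.1.le hlt.le, beta_integral hσ hτ hlt]
    ring
  rw [eL, eR] at hswap
  unfold rlInt
  have : ∀ s, (t - s) ^ (σ - 1) * (1 / Real.Gamma τ * ∫ r in (0 : ℝ)..s, (s - r) ^ (τ - 1) * f r) =
      1 / Real.Gamma τ * ((t - s) ^ (σ - 1) * ∫ r in (0 : ℝ)..s, (s - r) ^ (τ - 1) * f r) :=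
    fun s => by ring
  simp_rw [this]
  rw [intervalIntegral.integral_const_mul, hswap, hB]
  field_simp

/-! ### Riemann–Liouville integrals: elementary rules, and positivity of the Mittag-Leffler kernel -/

lemma kernel_continuous {σ : ℝ} (hσ : 1 ≤ σ) (t : ℝ) :
    Continuous (fun s : ℝ => (t - s) ^ (σ - 1)) :=
  (continuous_const.sub continuous_id).rpow_const fun _ => Or.inr (by linarith)

lemma kernel_mul_integrable {σ t : ℝ} (hσ : 1 ≤ σ) {f : ℝ → ℝ}
    (hf : IntervalIntegrable f volume 0 t) :
    IntervalIntegrable (fun s => (t - s) ^ (σ - 1) * f s) volume 0 t :=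
  hf.continuousOn_mul (kernel_continuous hσ t).continuousOn

lemma kernel_mul_continuous {σ t : ℝ} (hσ : 0 < σ) {f : ℝ → ℝ}
    (hf : Continuous f) :
    IntervalIntegrable (fun s => (t - s) ^ (σ - 1) * f s) volume 0 t := by
  refine IntervalIntegrable.mul_continuousOn ?_ hf.continuousOn
  have := (intervalIntegral.intervalIntegrable_rpow' (a := t) (b := 0)
    (by linarith : -1 < σ - 1)).comp_sub_left t
  simpa using this

lemma rlInt_rpow {σ τ t : ℝ} (hσ : 0 < σ) (hτ : 0 < τ) (ht : 0 < t) :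
    rlInt σ (fun s => s ^ (τ - 1)) t = Real.Gamma τ * t ^ (σ + τ - 1) / Real.Gamma (σ + τ) := by
  have h1 := Real.Gamma_pos_of_pos hσ
  rw [rlInt, beta_integral_zero hσ hτ ht]
  field_simp

lemma rlInt_one_fun {σ t : ℝ} (hσ : 0 < σ) (ht : 0 < t) :
    rlInt σ (fun _ => 1) t = t ^ σ / Real.Gamma (σ + 1) := by
  have := rlInt_rpow hσ one_pos ht
  simpa using this

lemma rlInt_id_fun {σ t : ℝ} (hσ : 0 < σ) (ht : 0 < t) :
    rlInt σ (fun s => s) t = t ^ (σ + 1) / Real.Gamma (σ + 2) := by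
  have := rlInt_rpow hσ two_pos ht
  norm_num at this
  rw [this]
  congr 2
  ring

lemma rlInt_one_left (f : ℝ → ℝ) (t : ℝ) : rlInt 1 f t = ∫ s in (0 : ℝ)..t, f s := by
  simp [rlInt]

lemma rlInt_sub {σ t : ℝ} {f g : ℝ → ℝ}
    (hf : IntervalIntegrable (fun s => (t - s) ^ (σ - 1) * f s) volume 0 t)
    (hg : IntervalIntegrable (fun s => (t - s) ^ (σ - 1) * g s) volume 0 t) :
    rlInt σ (fun s => f s - g s) t = rlInt σ f t - rlInt σ g t := by
  unfold rlInt
  simp_rw [mul_sub]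
  rw [intervalIntegral.integral_sub hf hg, mul_sub]

lemma rlInt_const_mul (σ t c : ℝ) (f : ℝ → ℝ) :
    rlInt σ (fun s => c * f s) t = c * rlInt σ f t := by
  unfold rlInt
  simp_rw [mul_left_comm _ c]
  rw [intervalIntegral.integral_const_mul]
  ring

lemma rlInt_congr {σ t : ℝ} (ht : 0 ≤ t) {f g : ℝ → ℝ} (h : ∀ s ∈ Set.Icc 0 t, f s = g s) :
    rlInt σ f t = rlInt σ g t := by
  unfold rlInt
  congr 1
  refine intervalIntegral.integral_congr fun s hs => ?_
  rw [Set.uIcc_of_le ht] at hs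
  simp only [h s hs]

lemma rlInt_zero (σ : ℝ) (f : ℝ → ℝ) : rlInt σ f 0 = 0 := by simp [rlInt]

/-- The integral over `[0, t]` is rewritten as one over `[0, T]` with kernel `max (t-s) 0 ^ (σ-1)`, to
which dominated convergence applies. -/
lemma rlInt_continuousOn {σ T : ℝ} (hσ : 1 < σ) (hT : 0 ≤ T) {f : ℝ → ℝ}
    (hf : IntervalIntegrable f volume 0 T) : ContinuousOn (rlInt σ f) (Set.Icc 0 T) := by
  have hc : Continuous (fun t : ℝ => ∫ s in (0 : ℝ)..T, (max (min t T - s) 0) ^ (σ - 1) * f s) := by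
    refine intervalIntegral.continuous_of_dominated_interval
      (bound := fun s => T ^ (σ - 1) * |f s|) (fun t => ?_) (fun t => ?_) ?_ ?_
    · refine AEStronglyMeasurable.mul ?_ (intervalIntegrable_iff.mp hf).aestronglyMeasurable
      exact (by fun_prop : Measurable fun s : ℝ =>
        (max (min t T - s) 0) ^ (σ - 1)).aestronglyMeasurable
    · refine ae_of_all _ fun s hs => ?_
      rw [Set.uIoc_of_le hT] at hs
      rw [norm_mul, Real.norm_of_nonneg (by positivity), Real.norm_eq_abs]
      have : max (min t T - s) 0 ≤ T := by
        refine max_le ?_ hT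
        linarith [min_le_right t T, hs.1]
      gcongr
    · exact hf.abs.const_mul _
    · refine ae_of_all _ fun s hs => ?_
      refine Continuous.mul ?_ continuous_const
      exact Continuous.rpow_const (by fun_prop) fun _ => Or.inr (by linarith)
  refine (hc.const_mul (1 / Real.Gamma σ)).continuousOn.congr fun t ht => ?_
  beta_reduce
  rw [rlInt, min_eq_left ht.2]
  congr 1
  have hi : ∀ a b : ℝ, 0 ≤ a → a ≤ T → 0 ≤ b → b ≤ T → IntervalIntegrable
      (fun s => (max (t - s) 0) ^ (σ - 1) * f s) volume a b := by
    intro a b ha haT hb hbT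
    refine (hf.continuousOn_mul (g := fun s => (max (t - s) 0) ^ (σ - 1)) ?_).mono_set ?_
    · exact (Continuous.rpow_const (by fun_prop) fun _ => Or.inr (by linarith)).continuousOn
    · rw [Set.uIcc_of_le hT]
      exact Set.uIcc_subset_Icc ⟨ha, haT⟩ ⟨hb, hbT⟩
  rw [← intervalIntegral.integral_add_adjacent_intervals (hi 0 t le_rfl hT ht.1 ht.2)
    (hi t T ht.1 ht.2 hT le_rfl)]
  have z : ∫ s in t..T, (max (t - s) 0) ^ (σ - 1) * f s = 0 := by
    rw [intervalIntegral.integral_congr (g := fun _ => 0)]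
    · simp
    · intro s hs
      rw [Set.uIcc_of_le ht.2] at hs
      simp only
      rw [max_eq_right (by linarith [hs.1]), Real.zero_rpow (by linarith), zero_mul]
  rw [z, add_zero]
  refine intervalIntegral.integral_congr fun s hs => ?_
  rw [Set.uIcc_of_le ht.1] at hs
  rw [max_eq_left (by linarith [hs.2])]

/-- The series `∑ (-a)^j I^(σ + 2μ + 2μj) f (t)` is the convolution of `f` with the kernel
`s^(σ+2μ-1) E_{2μ,σ+2μ}(-a s^(2μ))`, which is nonnegative for `σ ≥ μ` by `mlr_nonneg`. -/
lemma rl_series_nonneg {μ σ a t : ℝ} (hμ : 0 < μ) (hμ1 : μ < 1) (hσ : μ ≤ σ)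
    (hσ1 : 1 ≤ σ + 2 * μ) (ha : 0 < a)
    (ht : 0 < t) {f : ℝ → ℝ} (hf : IntervalIntegrable f volume 0 t)
    (hf0 : ∀ᵐ s ∂(volume.restrict (Set.Ioc 0 t)), 0 ≤ f s) :
    ∃ S, 0 ≤ S ∧ HasSum (fun j : ℕ => (-a) ^ j * rlInt (σ + 2 * μ + j * (2 * μ)) f t) S := by
  have hσ0 : 0 < σ := hμ.trans_le hσ
  have hρ : 0 < σ + 2 * μ := by positivity
  refine ⟨∫ s in (0 : ℝ)..t, mlr (2 * μ) (σ + 2 * μ) (a * (t - s) ^ (2 * μ)) *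
    ((t - s) ^ (σ + 2 * μ - 1) * f s), ?_, ?_⟩
  · rw [intervalIntegral.integral_of_le ht.le]
    refine integral_nonneg_of_ae ?_
    filter_upwards [hf0, ae_restrict_mem measurableSet_Ioc] with s hs hst
    have h1 : 0 ≤ t - s := by linarith [hst.2]
    have := mlr_nonneg hμ hμ1 hσ (by positivity : 0 ≤ a * (t - s) ^ (2 * μ))
    simp only [Pi.zero_apply]
    positivity
  · have hk := kernel_mul_integrable hσ1 hf
    have hterm : ∀ j : ℕ, (-a) ^ j * rlInt (σ + 2 * μ + j * (2 * μ)) f t =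
        ∫ s in (0 : ℝ)..t, (-(a * (t - s) ^ (2 * μ))) ^ j /
          Real.Gamma (σ + 2 * μ + j * (2 * μ)) * ((t - s) ^ (σ + 2 * μ - 1) * f s) := by
      intro j
      rw [rlInt, ← mul_assoc, ← intervalIntegral.integral_const_mul]
      refine intervalIntegral.integral_congr_ae ?_
      have hne : ∀ᵐ s : ℝ, s ≠ t := Measure.ae_ne volume t
      filter_upwards [hne] with s hs hst
      rw [Set.uIoc_of_le ht.le] at hst
      have h1 : 0 < t - s := by
        have := lt_of_le_of_ne hst.2 hs
        linarith
      rw [neg_mul_eq_neg_mul, mul_pow, ← Real.rpow_natCast ((t - s) ^ (2 * μ)), ← Real.rpow_mul h1.le,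
        show σ + 2 * μ + j * (2 * μ) - 1 = 2 * μ * j + (σ + 2 * μ - 1) by ring,
        Real.rpow_add h1]
      ring
    simp_rw [hterm]
    refine intervalIntegral.hasSum_integral_of_dominated_convergence
      (bound := fun j s => (a * t ^ (2 * μ)) ^ j / Real.Gamma (σ + 2 * μ + j * (2 * μ)) *
        |(t - s) ^ (σ + 2 * μ - 1) * f s|) (fun j => ?_) (fun j => ?_) ?_ ?_ ?_
    · refine AEStronglyMeasurable.mul ?_ (intervalIntegrable_iff.mp hk).aestronglyMeasurable
      exact (by fun_prop : Measurable fun s : ℝ => (-(a * (t - s) ^ (2 * μ))) ^ j /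
          Real.Gamma (σ + 2 * μ + j * (2 * μ))).aestronglyMeasurable
    · refine ae_of_all _ fun s hs => ?_
      rw [Set.uIoc_of_le ht.le] at hs
      have h1 : 0 ≤ t - s := by linarith [hs.2]
      have h2 := Real.Gamma_pos_of_pos (by positivity : 0 < σ + 2 * μ + j * (2 * μ))
      rw [norm_mul, norm_div, norm_pow, norm_neg, Real.norm_of_nonneg h2.le,
        Real.norm_of_nonneg (by positivity : 0 ≤ a * (t - s) ^ (2 * μ)), Real.norm_eq_abs]
      gcongr
      linarith [hs.1]
    · refine ae_of_all _ fun s _ => ?_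
      exact (summable_ml (by positivity) hρ (by positivity)).mul_right _
    · simp_rw [tsum_mul_right]
      exact hk.abs.const_mul _
    · refine ae_of_all _ fun s _ => ?_
      exact (mlr_hasSum (by positivity) hρ _).mul_right _

/-! ### Inverting the Caputo derivative -/

lemma rlInt_abs_le {σ t : ℝ} (hσ : 0 < σ) (ht : 0 ≤ t) {f g : ℝ → ℝ} (hg : Continuous g)
    (h : ∀ s ∈ Set.Icc 0 t, |f s| ≤ g s) : |rlInt σ f t| ≤ rlInt σ g t := by
  have h1 := Real.Gamma_pos_of_pos hσ
  unfold rlInt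
  rw [abs_mul, abs_of_pos (by positivity : 0 < 1 / Real.Gamma σ)]
  refine mul_le_mul_of_nonneg_left ?_ (by positivity)
  rw [← Real.norm_eq_abs]
  refine intervalIntegral.norm_integral_le_of_norm_le ht ?_ (kernel_mul_continuous hσ hg)
  refine ae_of_all _ fun s hs => ?_
  have h2 : 0 ≤ t - s := by linarith [hs.2]
  rw [norm_mul, Real.norm_of_nonneg (by positivity)]
  exact mul_le_mul_of_nonneg_left (h s ⟨hs.1.le, hs.2⟩) (by positivity)

/-- If `v(s) = o(s)` at `0` then `I^σ v (t) = O(t^(σ+1))`, so its derivative at `0` vanishes. -/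
lemma deriv_rlInt_zero {σ : ℝ} (hσ : 0 < σ) {v : ℝ → ℝ} (hv0 : v 0 = 0)
    (hv : HasDerivAt v 0 0) (hG : DifferentiableAt ℝ (rlInt σ v) 0) :
    deriv (rlInt σ v) 0 = 0 := by
  have h1 := hG.hasDerivAt.tendsto_slope_zero_right
  refine tendsto_nhds_unique h1 ?_
  have h2 := (hasDerivAt_iff_isLittleO.mp hv).def one_pos
  simp only [hv0, sub_zero, smul_zero, one_mul, Real.norm_eq_abs] at h2
  obtain ⟨δ, hδ, h3⟩ := Metric.eventually_nhds_iff.mp h2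
  have h4 : Tendsto (fun t : ℝ => t ^ σ / Real.Gamma (σ + 2)) (nhdsWithin 0 (Set.Ioi 0))
      (nhds 0) := by
    have : Tendsto (fun t : ℝ => t ^ σ / Real.Gamma (σ + 2)) (nhds 0) (nhds (0 ^ σ / Real.Gamma (σ + 2))) :=
      ((Real.continuousAt_rpow_const 0 σ (Or.inr hσ.le)).tendsto).div_const _
    rw [Real.zero_rpow hσ.ne', zero_div] at this
    exact this.mono_left nhdsWithin_le_nhds
  refine squeeze_zero_norm' ?_ h4
  filter_upwards [Ioo_mem_nhdsGT hδ] with t ht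
  have ht0 : 0 < t := ht.1
  rw [zero_add, rlInt_zero, sub_zero, norm_smul, norm_inv, Real.norm_of_nonneg ht.1.le,
    Real.norm_eq_abs]
  have h5 : |rlInt σ v t| ≤ rlInt σ (fun s => s) t := by
    refine rlInt_abs_le hσ ht.1.le continuous_id fun s hs => ?_
    have := h3 (y := s) (by rw [Real.dist_eq, sub_zero, abs_of_nonneg hs.1]; linarith [hs.2, ht.2])
    rwa [abs_of_nonneg hs.1] at this
  rw [rlInt_id_fun hσ ht.1, Real.rpow_add_one ht0.ne'] at h5
  calc t⁻¹ * |rlInt σ v t| ≤ t⁻¹ * (t ^ σ * t / Real.Gamma (σ + 2)) := by gcongr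
    _ = _ := by field_simp

/-- Taylor's formula with integral remainder for an `AC²` function with zero initial data. -/
lemma rlInt_two_of_AC2 {g : ℝ → ℝ} (h0 : g 0 = 0) (h1 : deriv g 0 = 0)
    (hAC : ∀ T > (0:ℝ), AC2On g T) {t : ℝ} (ht : 0 ≤ t) :
    g t = rlInt 2 (deriv (deriv g)) t := by
  obtain rfl | ht := ht.eq_or_lt
  · rw [h0, rlInt_zero]
  obtain ⟨hd, hi, he⟩ := hAC t ht
  have hk : IntervalIntegrable (fun s => (t - s) ^ ((1:ℝ) + 1 - 1) * deriv (deriv g) s) volume 0 t :=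
    kernel_mul_integrable (by norm_num) hi
  have h3 := rlInt_comp one_pos one_pos ht.le hi.aestronglyMeasurable hk
  rw [show (2:ℝ) = 1 + 1 by norm_num, ← h3]
  have hcg : ∀ s ∈ Set.Icc 0 t, rlInt 1 (deriv (deriv g)) s = deriv g s := by
    intro s hs
    rw [rlInt_one_left, he s hs, h1, zero_add]
  rw [rlInt_congr ht.le hcg, rlInt_one_left]
  have hcont : ContinuousOn (deriv g) (Set.Icc 0 t) := by
    have : ContinuousOn (fun s => deriv g 0 + ∫ u in (0:ℝ)..s, deriv (deriv g) u) (Set.Icc 0 t) := by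
      refine continuousOn_const.add ?_
      have := intervalIntegral.continuousOn_primitive_interval' hi (Set.left_mem_uIcc)
      rwa [Set.uIcc_of_le ht.le] at this
    exact this.congr he
  rw [intervalIntegral.integral_deriv_eq_sub, h0, sub_zero]
  · intro s hs
    rw [Set.uIcc_of_le ht.le] at hs
    exact hd s hs
  · refine ContinuousOn.intervalIntegrable ?_
    rwa [Set.uIcc_of_le ht.le]

/-- The fractional Taylor formula `w(t) = w(0) + w'(0) t + I^α (D^α w)(t)`.  Applying `I^(α-1)` to
`I^(2-α) v = I^2 (D^α w)`, where `v(s) = w(s) - w'(0) s - w(0)`, shows that `v` and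
`I^α (D^α w)` have the same primitive; both are continuous, hence equal. -/
lemma caputo_rep {α : ℝ} (hα1 : 1 < α) (hα2 : α < 2) {w : ℝ → ℝ} (hw : ContDiff ℝ 1 w)
    (hAC : ∀ T > (0:ℝ), AC2On (capKernel α w) T) {t : ℝ} (ht : 0 ≤ t) :
    w t - deriv w 0 * t - w 0 = rlInt α (caputoD α w) t := by
  obtain rfl | ht := ht.eq_or_lt
  · simp [rlInt_zero]
  set v : ℝ → ℝ := fun s => w s - deriv w 0 * s - w 0 with hv
  have hwd : Differentiable ℝ w := hw.differentiable (by norm_num)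
  have hvc : Continuous v := by
    have := hw.continuous
    fun_prop
  have hv0 : v 0 = 0 := by simp [hv]
  have hvd : HasDerivAt v 0 0 := by
    have : HasDerivAt v (deriv w 0 - deriv w 0 * 1) 0 := (((hwd 0).hasDerivAt).sub ((hasDerivAt_id (0:ℝ)).const_mul (deriv w 0))).sub_const (w 0)
    simpa only [mul_one, sub_self] using this
  have hG : capKernel α w = rlInt (2 - α) v := by rw [capKernel, if_neg hα2.ne]
  have hσ : 0 < 2 - α := by linarith
  have hG0 : capKernel α w 0 = 0 := by rw [hG, rlInt_zero]
  have hG1 : deriv (capKernel α w) 0 = 0 := by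
    rw [hG]
    refine deriv_rlInt_zero hσ hv0 hvd ?_
    rw [← hG]
    exact (hAC 1 one_pos).1 0 ⟨le_rfl, zero_le_one⟩
  have hrep : ∀ s, 0 ≤ s → rlInt (2 - α) v s = rlInt 2 (caputoD α w) s := by
    intro s hs
    rw [← hG]
    exact rlInt_two_of_AC2 hG0 hG1 hAC hs
  have hInt : ∀ T > 0, IntervalIntegrable (caputoD α w) volume 0 T := fun T hT => (hAC T hT).2.1
  have hprim : ∀ s, 0 < s → ∫ u in (0:ℝ)..s, v u = ∫ u in (0:ℝ)..s, rlInt α (caputoD α w) u := by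
    intro s hs
    have hm := (hInt s hs).aestronglyMeasurable
    have hα0 : 0 < α - 1 := by linarith
    have e1 := rlInt_comp hα0 hσ hs.le hvc.aestronglyMeasurable
      (kernel_mul_continuous (t := s) (by linarith : 0 < α - 1 + (2 - α)) hvc)
    have e2 := rlInt_comp hα0 two_pos hs.le hm
      (kernel_mul_integrable (by linarith : 1 ≤ α - 1 + 2) (hInt s hs))
    have e3 := rlInt_comp one_pos (by linarith : 0 < α) hs.le hm
      (kernel_mul_integrable (by linarith : 1 ≤ 1 + α) (hInt s hs))
    rw [← rlInt_one_left, ← rlInt_one_left, e3]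
    rw [rlInt_congr hs.le (fun u hu => hrep u hu.1), e2] at e1
    rw [show (1:ℝ) = α - 1 + (2 - α) by ring, ← e1]
    congr 1
    ring
  have hc := rlInt_continuousOn hα1 (by linarith : 0 ≤ t + 1) (hInt (t + 1) (by linarith))
  have d1 : HasDerivAt (fun s => ∫ u in (0:ℝ)..s, v u) (v t) t :=
    intervalIntegral.integral_hasDerivAt_right (hvc.intervalIntegrable _ _)
      (hvc.stronglyMeasurableAtFilter _ _) hvc.continuousAt
  have hnh : Set.Icc 0 (t + 1) ∈ nhds t := Icc_mem_nhds ht (by linarith)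
  have d2 : HasDerivAt (fun s => ∫ u in (0:ℝ)..s, rlInt α (caputoD α w) u)
      (rlInt α (caputoD α w) t) t := by
    refine intervalIntegral.integral_hasDerivAt_right ?_ ?_ (hc.continuousAt hnh)
    · refine ContinuousOn.intervalIntegrable ?_
      rw [Set.uIcc_of_le ht.le]
      exact hc.mono (Set.Icc_subset_Icc_right (by linarith))
    · exact ContinuousOn.stronglyMeasurableAtFilter_nhdsWithin hc measurableSet_Icc t |>.filter_mono
        (by rw [nhdsWithin_eq_nhds.mpr hnh])
  refine d1.unique (d2.congr_of_eventuallyEq ?_)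
  filter_upwards [lt_mem_nhds ht] with s hs using hprim s hs

/-! ### Lower bounds from the variation-of-constants formula -/

/-- The fractional Taylor formula for `w`, integrated to order `ρ`, with `h` written as
`(h + a w) - a w`. -/
lemma rl_step {α a ρ t : ℝ} (hα1 : 1 < α) (hρ : 0 < ρ) (ht : 0 < t) {w h : ℝ → ℝ}
    (hw : Continuous w) (hh : IntervalIntegrable h volume 0 t) {w0 w1 : ℝ}
    (hrep : ∀ s, 0 ≤ s → w s - w1 * s - w0 = rlInt α h s) :
    rlInt ρ w t = w0 * (t ^ ρ / Real.Gamma (ρ + 1)) + w1 * (t ^ (ρ + 1) / Real.Gamma (ρ + 2)) +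
      rlInt (ρ + α) (fun s => h s + a * w s) t - a * rlInt (ρ + α) w t := by
  have hρα : 1 ≤ ρ + α := by linarith
  have hkh := kernel_mul_integrable hρα hh
  have e1 := rlInt_comp hρ (by linarith : 0 < α) ht.le hh.aestronglyMeasurable hkh
  rw [← rlInt_congr ht.le (fun s hs => hrep s hs.1)] at e1
  have e2 : rlInt ρ (fun s => w s - w1 * s - w0) t = rlInt ρ w t - w1 * rlInt ρ (fun s => s) t
      - w0 * rlInt ρ (fun _ => 1) t := by
    rw [← rlInt_const_mul, ← rlInt_const_mul]
    simp only [mul_one]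
    rw [rlInt_sub (f := fun s => w s - w1 * s) (g := fun _ => w0),
      rlInt_sub (f := w) (g := fun s => w1 * s)]
    all_goals exact kernel_mul_continuous hρ (by fun_prop)
  have e3 : rlInt (ρ + α) h t = rlInt (ρ + α) (fun s => h s + a * w s) t - a * rlInt (ρ + α) w t := by
    rw [← rlInt_const_mul, ← rlInt_sub]
    · simp
    · exact kernel_mul_integrable hρα (hh.add ((hw.const_mul a).intervalIntegrable _ _) :)
    · exact kernel_mul_continuous (by linarith) (by fun_prop)
  rw [rlInt_one_fun hρ ht, rlInt_id_fun hρ ht] at e2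
  linarith

lemma rl_iterate {α a β t : ℝ} (hα1 : 1 < α) (hβ : 0 < β) (ht : 0 < t) {w h : ℝ → ℝ}
    (hw : Continuous w) (hh : IntervalIntegrable h volume 0 t) {w0 w1 : ℝ}
    (hrep : ∀ s, 0 ≤ s → w s - w1 * s - w0 = rlInt α h s) (N : ℕ) :
    rlInt β w t = ∑ j ∈ Finset.range N, (w0 * t ^ β * ((-(a * t ^ α)) ^ j / Real.Gamma (β + 1 + j * α)) +
      w1 * t ^ (β + 1) * ((-(a * t ^ α)) ^ j / Real.Gamma (β + 2 + j * α)) +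
      (-a) ^ j * rlInt (β + α + j * α) (fun s => h s + a * w s) t) +
      (-a) ^ N * rlInt (β + N * α) w t := by
  induction N with
  | zero => simp
  | succ N ih =>
    rw [Finset.sum_range_succ]
    have hρ : 0 < β + N * α := by positivity
    have hs := rl_step (a := a) hα1 hρ ht hw hh hrep
    have ht' : t ^ (β + N * α) = t ^ β * (t ^ α) ^ N := by
      rw [Real.rpow_add ht, mul_comm (N : ℝ), Real.rpow_mul ht.le, Real.rpow_natCast]
    rw [Real.rpow_add_one ht.ne', ht'] at hs
    rw [hs] at ih
    rw [ih, neg_mul_eq_neg_mul, mul_pow, Real.rpow_add_one ht.ne']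
    push_cast
    rw [show β + (N + 1) * α = β + N * α + α by ring, show β + 1 + N * α = β + N * α + 1 by ring,
      show β + 2 + N * α = β + N * α + 2 by ring, show β + α + N * α = β + N * α + α by ring]
    ring

/-- Comparison with the homogeneous linear problem: the contribution of the source `h + a w ≥ 0` to
the variation-of-constants formula is nonnegative. -/
lemma rl_lower {μ a β t : ℝ} (hμ : 1 / 2 < μ) (hμ1 : μ < 1) (hβ : μ ≤ β) (ha : 0 < a)
    (ht : 0 < t) {w h : ℝ → ℝ}
    (hw : Continuous w) (hh : IntervalIntegrable h volume 0 t) {w0 w1 : ℝ}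
    (hrep : ∀ s, 0 ≤ s → w s - w1 * s - w0 = rlInt (2 * μ) h s)
    (hpos : ∀ᵐ s ∂(volume.restrict (Set.Ioc 0 t)), 0 ≤ h s + a * w s) :
    w0 * t ^ β * mlr (2 * μ) (β + 1) (a * t ^ (2 * μ)) +
      w1 * t ^ (β + 1) * mlr (2 * μ) (β + 2) (a * t ^ (2 * μ)) ≤ rlInt β w t := by
  have hμ0 : 0 < μ := by linarith
  have hβ0 : 0 < β := by linarith
  have hα1 : 1 < 2 * μ := by linarith
  obtain ⟨S, hS, hsum⟩ := rl_series_nonneg hμ0 hμ1 hβ (by linarith) ha ht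
    (hh.add ((hw.const_mul a).intervalIntegrable _ _)) hpos
  have hA := (mlr_hasSum (α := 2 * μ) (σ := β + 1) (by positivity) (by positivity)
    (a * t ^ (2 * μ))).mul_left (w0 * t ^ β)
  have hB := (mlr_hasSum (α := 2 * μ) (σ := β + 2) (by positivity) (by positivity)
    (a * t ^ (2 * μ))).mul_left (w1 * t ^ (β + 1))
  have hlim := ((hA.add hB).add hsum).tendsto_sum_nat
  -- `M` bounds `|w|` on `[0, t]`; the remainder after `N` steps is at most
  -- `M t^β (a t^(2μ))^N / Γ(β + 1 + 2μN)`
  obtain ⟨M, hM⟩ := isCompact_Icc.exists_bound_of_continuousOn (s := Set.Icc 0 t) hw.continuousOn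
  have hrem : Tendsto (fun N : ℕ => (-a) ^ N * rlInt (β + N * (2 * μ)) w t) atTop (nhds 0) := by
    have hz := ((summable_ml (μ := 2 * μ) (σ := β + 1) (y := a * t ^ (2 * μ)) (by positivity)
      (by positivity) (by positivity)).mul_left (M * t ^ β)).tendsto_atTop_zero
    refine squeeze_zero_norm (fun N => ?_) hz
    have hρ : 0 < β + N * (2 * μ) := by positivity
    have h1 : |rlInt (β + N * (2 * μ)) w t| ≤ rlInt (β + N * (2 * μ)) (fun _ => M * 1) t :=
      rlInt_abs_le hρ ht.le continuous_const fun s hs => by simpa using hM s hs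
    rw [rlInt_const_mul, rlInt_one_fun hρ ht] at h1
    rw [norm_mul, norm_pow, norm_neg, Real.norm_of_nonneg ha.le, Real.norm_eq_abs]
    refine (mul_le_mul_of_nonneg_left h1 (by positivity)).trans_eq ?_
    rw [Real.rpow_add ht, mul_comm (N : ℝ), Real.rpow_mul ht.le, Real.rpow_natCast, mul_pow,
      show β + 1 + 2 * μ * N = β + 2 * μ * N + 1 by ring]
    ring
  have hall := hlim.add hrem
  simp_rw [← rl_iterate (a := a) hα1 hβ0 ht hw hh hrep] at hall
  have := tendsto_nhds_unique hall tendsto_const_nhds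
  linarith

/-- The kernel positivity of `rl_series_nonneg` tested on `s^(1-2μ) - t^(1-2μ) ≥ 0`.  The first term
produces `Γ(2-2μ) t^(β+1) E_{β+2}`, the second `t^(β+1) E_{β+1+2μ}`, which the recurrence turns
into `E_{β+1}`. -/
lemma mlr_lower {μ a β t : ℝ} (hμ : 1 / 2 < μ) (hμ1 : μ < 1) (hβ : μ ≤ β) (ha : 0 < a)
    (ht : 0 < t) :
    1 / Real.Gamma (β + 1) - mlr (2 * μ) (β + 1) (a * t ^ (2 * μ)) ≤
      Real.Gamma (2 - 2 * μ) * (a * t ^ (2 * μ) * mlr (2 * μ) (β + 2) (a * t ^ (2 * μ))) := by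
  have hμ0 : 0 < μ := by linarith
  have hβ0 : 0 < β := by linarith
  have hτ : 0 < 2 - 2 * μ := by linarith
  have hi1 : IntervalIntegrable (fun s : ℝ => s ^ (2 - 2 * μ - 1)) volume 0 t :=
    intervalIntegral.intervalIntegrable_rpow' (by linarith)
  have hi2 : IntervalIntegrable (fun _ : ℝ => t ^ (1 - 2 * μ) * 1) volume 0 t := by simp
  obtain ⟨S, hS, hsum⟩ := rl_series_nonneg hμ0 hμ1 hβ (by linarith) ha ht
    (f := fun s => s ^ (2 - 2 * μ - 1) - t ^ (1 - 2 * μ) * 1) (hi1.sub hi2) (by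
      filter_upwards [ae_restrict_mem measurableSet_Ioc] with s hs
      rw [show 2 - 2 * μ - 1 = 1 - 2 * μ by ring, mul_one, sub_nonneg]
      exact Real.rpow_le_rpow_of_nonpos hs.1 hs.2 (by linarith))
  have hA := (mlr_hasSum (α := 2 * μ) (σ := β + 2) (by positivity) (by positivity)
    (a * t ^ (2 * μ))).mul_left (Real.Gamma (2 - 2 * μ) * t ^ (β + 1))
  have hB := (mlr_hasSum (α := 2 * μ) (σ := β + 1 + 2 * μ) (by positivity) (by positivity)
    (a * t ^ (2 * μ))).mul_left (t ^ (1 - 2 * μ) * t ^ (β + 2 * μ))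
  have hAB := hA.sub hB
  have hterm : ∀ j : ℕ, (-a) ^ j * rlInt (β + 2 * μ + j * (2 * μ))
      (fun s => s ^ (2 - 2 * μ - 1) - t ^ (1 - 2 * μ) * 1) t =
      Real.Gamma (2 - 2 * μ) * t ^ (β + 1) * ((-(a * t ^ (2 * μ))) ^ j / Real.Gamma (β + 2 + j * (2 * μ)))
      - t ^ (1 - 2 * μ) * t ^ (β + 2 * μ) * ((-(a * t ^ (2 * μ))) ^ j /
        Real.Gamma (β + 1 + 2 * μ + j * (2 * μ))) := by
    intro j
    have hρ : 0 < β + 2 * μ + j * (2 * μ) := by positivity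
    have hρ1 : 1 ≤ β + 2 * μ + j * (2 * μ) := by
      have : 0 ≤ j * (2 * μ) := by positivity
      linarith
    rw [rlInt_sub (kernel_mul_integrable hρ1 hi1) (kernel_mul_integrable hρ1 hi2),
      rlInt_const_mul, rlInt_one_fun hρ ht, rlInt_rpow hρ hτ ht,
      neg_mul_eq_neg_mul, mul_pow, ← Real.rpow_natCast (t ^ (2 * μ)), ← Real.rpow_mul ht.le,
      show β + 2 * μ + j * (2 * μ) + (2 - 2 * μ) - 1 = β + 1 + 2 * μ * j by ring,
      Real.rpow_add ht (β + 1),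
      show t ^ (β + 2 * μ + j * (2 * μ)) = t ^ (β + 2 * μ) * t ^ (2 * μ * j) by
        rw [← Real.rpow_add ht]; ring_nf,
      show β + 2 * μ + j * (2 * μ) + (2 - 2 * μ) = β + 2 + j * (2 * μ) by ring,
      show β + 2 * μ + j * (2 * μ) + 1 = β + 1 + 2 * μ + j * (2 * μ) by ring]
    ring
  simp_rw [hterm] at hsum
  have hS' := hsum.unique hAB
  have hr := mlr_recurrence (α := 2 * μ) (σ := β + 1) (by positivity) (by positivity)
    (a * t ^ (2 * μ))
  have hp : t ^ (1 - 2 * μ) * t ^ (β + 2 * μ) = t ^ (β + 1) := by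
    rw [← Real.rpow_add ht]
    ring_nf
  rw [hp] at hS'
  have hpos : 0 < t ^ (β + 1) := by positivity
  have h2 : mlr (2 * μ) (β + 1 + 2 * μ) (a * t ^ (2 * μ)) ≤
      Real.Gamma (2 - 2 * μ) * mlr (2 * μ) (β + 2) (a * t ^ (2 * μ)) := by
    refine le_of_mul_le_mul_left ?_ hpos
    linarith
  have h3 : 0 ≤ a * t ^ (2 * μ) := by positivity
  have h4 := mul_le_mul_of_nonneg_left h2 h3
  linarith

/-! ### The lower limit -/

/-- Corollary 2.5 (iv): for β ∈ [α/2, α), if α+γ ≤ 2 and w'(0) > 0 then liminf t^{α−β−1} (₀I_t^β w)(t) > 0. -/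
theorem cor_liminf_pos_iv
    (γ α p a b : ℝ) (w : ℝ → ℝ)
    (hγ : 0 < γ) (hα1 : 1 < α) (hα2 : α < 2) (hp : 1 < p) (ha : 0 < a) (hb : 0 < b)
    (hw : ContDiff ℝ 1 w)
    (hw0 : ∃ t : ℝ, 0 ≤ t ∧ w t ≠ 0)
    (hAC : ∀ T > (0:ℝ), AC2On (capKernel α w) T)
    (hineq : ∀ᵐ t ∂(volume.restrict (Set.Ici (0:ℝ))),
      caputoD α w t + a * w t ≥ b * rlInt γ (fun s => |w s| ^ p) t)
    (β : ℝ) (hβ1 : α / 2 ≤ β) (hβ2 : β < α) (hαγ : α + γ ≤ 2) (hw' : 0 < deriv w 0) :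
    0 < liminf (fun t : ℝ => ((t ^ (α - β - 1) * rlInt β w t : ℝ) : EReal)) atTop := by
  have hwc := hw.continuous
  have hrep : ∀ s, 0 ≤ s → w s - deriv w 0 * s - w 0 = rlInt α (caputoD α w) s :=
    fun s hs => caputo_rep hα1 hα2 hw hAC hs
  have hpos : ∀ᵐ s ∂(volume.restrict (Set.Ici (0:ℝ))), 0 ≤ caputoD α w s + a * w s := by
    filter_upwards [hineq, ae_restrict_mem measurableSet_Ici] with s hs hs0
    refine le_trans (mul_nonneg hb.le ?_) hs
    refine mul_nonneg (one_div_nonneg.mpr (Real.Gamma_pos_of_pos hγ).le) ?_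
    refine intervalIntegral.integral_nonneg hs0 fun u hu => ?_
    have : 0 ≤ s - u := by linarith [hu.2]
    positivity
  obtain ⟨μ, rfl⟩ : ∃ μ, α = 2 * μ := ⟨α / 2, by ring⟩
  have hμ : 1 / 2 < μ := by linarith
  have hμ1 : μ < 1 := by linarith
  have hβ : μ ≤ β := by linarith
  have hG2 : 0 < Real.Gamma (2 - 2 * μ) := Real.Gamma_pos_of_pos (by linarith)
  have hGβ : 0 < Real.Gamma (β + 1) := Real.Gamma_pos_of_pos (by linarith)
  have hGd : 0 < Real.Gamma (β + 1 - μ) := Real.Gamma_pos_of_pos (by linarith)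
  -- `|E_{β+1}(a t^(2μ))| ≤ D t^(-μ)`, and `K / Γ(β+1)` is the limit of the lower bound
  set D : ℝ := 1 / Real.Gamma (β + 1 - μ) / √a with hD
  set K : ℝ := deriv w 0 / (a * Real.Gamma (2 - 2 * μ)) with hK
  have hsa : 0 < √a := Real.sqrt_pos.mpr ha
  have hD0 : 0 < D := by positivity
  have hK0 : 0 < K := by positivity
  have hbound : ∀ t : ℝ, 0 < t → K * (1 / Real.Gamma (β + 1)) - |w 0| * D * t ^ (-(1 - μ))
      - K * D * t ^ (-μ) ≤ t ^ (2 * μ - β - 1) * rlInt β w t := by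
    intro t ht
    have h1 := rl_lower hμ hμ1 hβ ha ht hwc (hAC t ht).2.1 hrep
      (ae_restrict_of_ae_restrict_of_subset
        (fun s (hs : s ∈ Set.Ioc 0 t) => Set.mem_Ici.mpr hs.1.le) hpos)
    have h2 := mlr_lower hμ hμ1 hβ ha ht
    have h3 := mlr_abs_le (μ := μ) (σ := β + 1 - μ) (x := a * t ^ (2 * μ)) (by linarith) hμ1
      (by linarith) (by positivity)
    rw [show β + 1 - μ + μ = β + 1 by ring] at h3
    set E1 := mlr (2 * μ) (β + 1) (a * t ^ (2 * μ)) with hE1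
    set E2 := mlr (2 * μ) (β + 2) (a * t ^ (2 * μ)) with hE2
    have hsq : √(a * t ^ (2 * μ)) = √a * t ^ μ := by
      rw [Real.sqrt_mul ha.le, mul_comm 2 μ, Real.rpow_mul ht.le, Real.rpow_two,
        Real.sqrt_sq (by positivity)]
    have h4 : |E1| ≤ D * t ^ (-μ) := by
      refine h3.trans_eq ?_
      rw [hsq, Real.rpow_neg ht.le, hD]
      field_simp
    have h5 := mul_le_mul_of_nonneg_left h1 (by positivity : 0 ≤ t ^ (2 * μ - β - 1))
    have p1 : t ^ (2 * μ - β - 1) * t ^ β = t ^ (2 * μ - 1) := by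
      rw [← Real.rpow_add ht]; ring_nf
    have p2 : t ^ (2 * μ - β - 1) * t ^ (β + 1) = t ^ (2 * μ) := by
      rw [← Real.rpow_add ht]; ring_nf
    have p3 : t ^ (2 * μ - 1) * t ^ (-μ) = t ^ (-(1 - μ)) := by
      rw [← Real.rpow_add ht]; ring_nf
    have h6 : t ^ (2 * μ - β - 1) * (w 0 * t ^ β * E1 + deriv w 0 * t ^ (β + 1) * E2) =
        w 0 * t ^ (2 * μ - 1) * E1 + K * (Real.Gamma (2 - 2 * μ) * (a * t ^ (2 * μ) * E2)) := by
      have hKG : K * (a * Real.Gamma (2 - 2 * μ)) = deriv w 0 := by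
        rw [hK, div_mul_cancel₀ _ (by positivity)]
      rw [← p1, ← p2]
      linear_combination -(t ^ (2 * μ - β - 1) * t ^ (β + 1) * E2) * hKG
    rw [h6] at h5
    have h7 := mul_le_mul_of_nonneg_left h2 hK0.le
    have h8 : K * E1 ≤ K * (D * t ^ (-μ)) :=
      mul_le_mul_of_nonneg_left ((le_abs_self _).trans h4) hK0.le
    have h9 : -(|w 0| * D * t ^ (-(1 - μ))) ≤ w 0 * t ^ (2 * μ - 1) * E1 := by
      rw [← p3]
      refine neg_le_of_abs_le ?_
      rw [abs_mul, abs_mul, abs_of_pos (by positivity : 0 < t ^ (2 * μ - 1))]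
      calc |w 0| * t ^ (2 * μ - 1) * |E1| ≤ |w 0| * t ^ (2 * μ - 1) * (D * t ^ (-μ)) := by gcongr
        _ = _ := by ring
    linarith
  set c : ℝ := K * (1 / Real.Gamma (β + 1)) with hc
  have hc0 : 0 < c := by positivity
  have hlim : Tendsto (fun t : ℝ => c - |w 0| * D * t ^ (-(1 - μ)) - K * D * t ^ (-μ)) atTop
      (nhds c) := by
    have l1 := (tendsto_rpow_neg_atTop (by linarith : 0 < 1 - μ)).const_mul (|w 0| * D)
    have l2 := (tendsto_rpow_neg_atTop (by linarith : 0 < μ)).const_mul (K * D)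
    simpa using (l1.const_sub c).sub l2
  have hev := hlim.eventually (lt_mem_nhds (half_lt_self hc0))
  have hfin : ((c / 2 : ℝ) : EReal) ≤
      liminf (fun t : ℝ => ((t ^ (2 * μ - β - 1) * rlInt β w t : ℝ) : EReal)) atTop := by
    refine le_liminf_of_le (by isBoundedDefault) ?_
    filter_upwards [hev, eventually_gt_atTop 0] with t ht ht0
    exact EReal.coe_le_coe_iff.mpr (ht.le.trans (hbound t ht0))
  refine lt_of_lt_of_le ?_ hfin
  exact_mod_cast half_pos hc0
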